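/- Let A be the 5-by-5 reciprocal matrix with rows (1, 1, 9, 4, 1/2), (1, 1, 1, 4, 3), (1/9, 1, 1, 1, 1/3), (1/4, 1/4, 1, 1, 2), (2, 1/3, 3, 1/2, 1). Then for every w_5 with 3/8 ≤ w_5 ≤ 6, the vector (3, 2, 1, 3/4, w_5) is efficient for A; moreover, these are the only efficient vectors for A with first four entries (3, 2, 1, 3/4). -/

import Mathlib

/-- A positive vector `w` is efficient for a reciprocal matrix `A` if every positive
vector `v` with `|v i / v j - A i j| ≤ |w i / w j - A i j|` entrywise is a positive
scalar multiple of `w`. -/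
def Efficient {n : ℕ} (A : Matrix (Fin n) (Fin n) ℝ) (w : Fin n → ℝ) : Prop :=
  ∀ v : Fin n → ℝ, (∀ i, 0 < v i) →
    (∀ i j, |v i / v j - A i j| ≤ |w i / w j - A i j|) →
    ∃ c : ℝ, 0 < c ∧ v = fun i => c * w i

/-!
Join `i` to `j` whenever `A i j ≤ w i / w j`. If `v` is entrywise at least as close to `A` as `w`,
then `v / w` cannot decrease along an edge, so `v / w` is constant when the digraph is strongly
connected. If it is not, no edge leaves some nonempty proper set `S` of vertices, and enlarging the
entries of `w` on `S` by a factor slightly above `1` improves the approximation of `A`.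

For the given matrix, `0 → 4 → 3 → 1 → 2 → 0` is a Hamiltonian cycle when `3/8 ≤ w₅ ≤ 6`, whereas
no edge leaves vertex `4` when `w₅ < 3/8` and none enters it when `6 < w₅`.
-/

open Filter Relation Topology

/-- Strong connectivity of a digraph given by its adjacency relation `r`: every vertex is reached
from every vertex by a directed walk. -/
def IsStronglyConnected {α : Type*} (r : α → α → Prop) : Prop :=
  ∀ a b, ReflTransGen r a b

lemma isStronglyConnected_of_forall_sameCycle {α : Type*} [Finite α] {r : α → α → Prop}
    {σ : Equiv.Perm α} (hσ : ∀ a b, σ.SameCycle a b) (hr : ∀ a, r a (σ a)) :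
    IsStronglyConnected r := by
  intro a b
  obtain ⟨m, -, rfl⟩ := (hσ a b).exists_pow_eq'
  induction m with
  | zero => exact .refl
  | succ m ih =>
    rw [pow_succ', Equiv.Perm.mul_apply]
    exact ih.tail (hr _)

/-- The edge relation of the digraph attached to a reciprocal matrix `A` and a positive vector `w`,
whose strong connectivity characterises efficiency. Loops, which every vertex would have since
`A i i = 1`, are left out. -/
def EfficiencyEdge {ι : Type*} (A : Matrix ι ι ℝ) (w : ι → ℝ) (i j : ι) : Prop :=
  i ≠ j ∧ A i j ≤ w i / w j

lemma exists_one_lt_forall_mul_lt {κ : Type*} {s : Set κ} (hs : s.Finite) {r a : κ → ℝ}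
    (h : ∀ k ∈ s, r k < a k) : ∃ t > 1, ∀ k ∈ s, t * r k < a k := by
  have near_one : ∀ᶠ t in 𝓝[>] (1 : ℝ), ∀ k ∈ s, t * r k < a k := by
    refine (eventually_all_finite hs).2 fun k hk => ?_
    have htendsto : Tendsto (fun t : ℝ => t * r k) (𝓝[>] 1) (𝓝 (1 * r k)) :=
      ((continuous_mul_const (r k)).tendsto 1).mono_left nhdsWithin_le_nhds
    exact htendsto.eventually_lt_const (by simpa only [one_mul] using h k hk)
  obtain ⟨t, ht, ht_one⟩ := (near_one.and self_mem_nhdsWithin).exists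
  exact ⟨t, ht_one, ht⟩

section Perturbation

variable {ι : Type*} {A : Matrix ι ι ℝ} {v w : ι → ℝ}

lemma EfficiencyEdge.div_le_div {i j : ι} (hij : EfficiencyEdge A w i j) (hvj : 0 < v j)
    (hwi : 0 < w i) (hwj : 0 < w j) (hvw : |v i / v j - A i j| ≤ |w i / w j - A i j|) :
    v i / w i ≤ v j / w j := by
  rw [abs_of_nonneg (sub_nonneg.2 hij.2)] at hvw
  have hratio : v i / v j ≤ w i / w j := (sub_le_sub_iff_right _).1 ((le_abs_self _).trans hvw)
  rw [div_le_div_iff₀ hvj hwj] at hratio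
  rwa [div_le_div_iff₀ hwi hwj, mul_comm (v j)]

lemma div_le_div_of_reflTransGen_efficiencyEdge (hv : ∀ i, 0 < v i) (hw : ∀ i, 0 < w i)
    (hvw : ∀ i j, |v i / v j - A i j| ≤ |w i / w j - A i j|) {i j : ι}
    (hij : ReflTransGen (EfficiencyEdge A w) i j) : v i / w i ≤ v j / w j := by
  induction hij with
  | refl => exact le_rfl
  | tail _ hedge ih => exact ih.trans (hedge.div_le_div (hv _) (hw _) (hw _) (hvw _ _))

lemma abs_piecewise_smul_div_sub_le (hA : ∀ i j, A j i = (A i j)⁻¹) (hw : ∀ i, 0 < w i)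
    {S : Set ι} [DecidablePred (· ∈ S)] {t : ℝ} (ht : 1 ≤ t)
    (hS : ∀ i ∈ S, ∀ j ∉ S, t * (w i / w j) ≤ A i j) (i j : ι) :
    |S.piecewise (t • w) w i / S.piecewise (t • w) w j - A i j| ≤ |w i / w j - A i j| := by
  have ht_pos : 0 < t := one_pos.trans_le ht
  have hratio (k l : ι) : 0 < w k / w l := div_pos (hw k) (hw l)
  by_cases hi : i ∈ S <;> by_cases hj : j ∈ S <;>
    simp only [hi, hj, not_false_eq_true, Set.piecewise_eq_of_mem, Set.piecewise_eq_of_notMem,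
      Pi.smul_apply, smul_eq_mul, le_refl]
  · rw [mul_div_mul_left _ _ ht_pos.ne']
  · refine Set.abs_sub_left_of_mem_uIcc (Set.mem_uIcc_of_ge ?_ ?_)
    · rw [mul_div_assoc]
      exact le_mul_of_one_le_left (hratio i j).le ht
    · rw [mul_div_assoc]
      exact hS i hi j hj
  · refine Set.abs_sub_left_of_mem_uIcc (Set.mem_uIcc_of_le ?_ ?_)
    · have hinv := inv_anti₀ (mul_pos ht_pos (hratio j i)) (hS j hj i hi)
      rwa [← hA, ← mul_div_assoc, inv_div] at hinv
    · exact div_le_div_of_nonneg_left (hw i).le (hw j) (le_mul_of_one_le_left (hw j).le ht)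

end Perturbation

section Characterization

variable {n : ℕ} {A : Matrix (Fin n) (Fin n) ℝ} {w : Fin n → ℝ}

theorem Efficient.exists_efficiencyEdge (h : Efficient A w) (hA : ∀ i j, A j i = (A i j)⁻¹)
    (hw : ∀ i, 0 < w i) {S : Set (Fin n)} {i j : Fin n} (hi : i ∈ S) (hj : j ∉ S) :
    ∃ k ∈ S, ∃ l ∉ S, EfficiencyEdge A w k l := by
  classical
  by_contra! hcut
  have hlt : ∀ p ∈ S ×ˢ Sᶜ, w p.1 / w p.2 < A p.1 p.2 := fun p ⟨hp₁, hp₂⟩ =>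
    not_le.1 fun hle => hcut p.1 hp₁ p.2 hp₂ ⟨ne_of_mem_of_not_mem hp₁ hp₂, hle⟩
  obtain ⟨t, ht, htS⟩ := exists_one_lt_forall_mul_lt (Set.toFinite _) hlt
  have hS : ∀ k ∈ S, ∀ l ∉ S, t * (w k / w l) ≤ A k l := fun k hk l hl =>
    (htS (k, l) ⟨hk, hl⟩).le
  have hv_pos (k : Fin n) : 0 < S.piecewise (t • w) w k := by
    rw [Set.piecewise]
    split_ifs
    exacts [mul_pos (one_pos.trans ht) (hw k), hw k]
  obtain ⟨c, -, hc⟩ := h _ hv_pos (abs_piecewise_smul_div_sub_le hA hw ht.le hS)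
  have hct : t * w i = c * w i := by simpa [hi] using congrFun hc i
  have hc_one : 1 * w j = c * w j := by simpa [hj] using congrFun hc j
  exact ht.ne ((mul_right_cancel₀ (hw j).ne' hc_one).trans (mul_right_cancel₀ (hw i).ne' hct).symm)

theorem efficient_of_isStronglyConnected (hw : ∀ i, 0 < w i)
    (h : IsStronglyConnected (EfficiencyEdge A w)) : Efficient A w := by
  intro v hv hvw
  obtain hn | ⟨⟨i₀⟩⟩ := isEmpty_or_nonempty (Fin n)
  · exact ⟨1, one_pos, Subsingleton.elim _ _⟩
  refine ⟨v i₀ / w i₀, div_pos (hv i₀) (hw i₀), funext fun i => ?_⟩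
  have hconst : v i₀ / w i₀ = v i / w i :=
    (div_le_div_of_reflTransGen_efficiencyEdge hv hw hvw (h i₀ i)).antisymm
      (div_le_div_of_reflTransGen_efficiencyEdge hv hw hvw (h i i₀))
  rw [hconst, div_mul_cancel₀ _ (hw i).ne']

/-- The criterion of Blanquero, Carrizosa and Conde. -/
theorem efficient_iff_isStronglyConnected (hA : ∀ i j, A j i = (A i j)⁻¹) (hw : ∀ i, 0 < w i) :
    Efficient A w ↔ IsStronglyConnected (EfficiencyEdge A w) := by
  refine ⟨fun h i j => ?_, efficient_of_isStronglyConnected hw⟩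
  by_contra hij
  obtain ⟨k, hk, l, hl, hkl⟩ :=
    h.exists_efficiencyEdge hA hw (S := {k | ReflTransGen (EfficiencyEdge A w) i k}) .refl hij
  exact hl (ReflTransGen.tail hk hkl)

end Characterization

section Example

/-- The reciprocal matrix of the example. -/
noncomputable def exampleMatrix : Matrix (Fin 5) (Fin 5) ℝ :=
  !![1, 1, 9, 4, 1 / 2;
    1, 1, 1, 4, 3;
    1 / 9, 1, 1, 1, 1 / 3;
    1 / 4, 1 / 4, 1, 1, 2;
    2, 1 / 3, 3, 1 / 2, 1]

/-- The vectors whose efficiency for `exampleMatrix` is studied; the free last entry `x` is the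
`w₅` of the paper. -/
noncomputable def exampleVector (x : ℝ) : Fin 5 → ℝ :=
  ![3, 2, 1, 3 / 4, x]

lemma exampleMatrix_apply_swap (i j : Fin 5) : exampleMatrix j i = (exampleMatrix i j)⁻¹ := by
  fin_cases i <;> fin_cases j <;> norm_num [exampleMatrix]

variable {x : ℝ}

lemma exampleVector_pos (hx : 0 < x) (i : Fin 5) : 0 < exampleVector x i := by
  fin_cases i <;> simp [exampleVector, hx]

lemma three_div_eight_le_of_efficiencyEdge {j : Fin 5}
    (h : EfficiencyEdge exampleMatrix (exampleVector x) 4 j) : 3 / 8 ≤ x := by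
  obtain ⟨hj, hle⟩ := h
  fin_cases j
  · change 2 ≤ x / 3 at hle
    linarith
  · change 1 / 3 ≤ x / 2 at hle
    linarith
  · change 3 ≤ x / 1 at hle
    linarith
  · change 1 / 2 ≤ x / (3 / 4) at hle
    linarith
  · exact absurd rfl hj

lemma le_six_of_efficiencyEdge (hx : 0 < x) {i : Fin 5}
    (h : EfficiencyEdge exampleMatrix (exampleVector x) i 4) : x ≤ 6 := by
  obtain ⟨hi, hle⟩ := h
  replace hle : exampleMatrix i 4 * x ≤ exampleVector x i := (le_div_iff₀ hx).1 hle
  fin_cases i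
  · change 1 / 2 * x ≤ 3 at hle
    linarith
  · change 3 * x ≤ 2 at hle
    linarith
  · change 1 / 3 * x ≤ 1 at hle
    linarith
  · change 2 * x ≤ 3 / 4 at hle
    linarith
  · exact absurd rfl hi

lemma efficiencyEdge_hamiltonianCycle (hlo : 3 / 8 ≤ x) (hhi : x ≤ 6) (i : Fin 5) :
    EfficiencyEdge exampleMatrix (exampleVector x) i (c[0, 4, 3, 1, 2] i) := by
  refine ⟨by decide +revert, ?_⟩
  fin_cases i
  · change 1 / 2 ≤ 3 / x
    rw [le_div_iff₀ (by linarith)]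
    linarith
  · change (1 : ℝ) ≤ 2 / 1
    norm_num
  · change (1 / 9 : ℝ) ≤ 1 / 3
    norm_num
  · change (1 / 4 : ℝ) ≤ 3 / 4 / 2
    norm_num
  · change 1 / 2 ≤ x / (3 / 4)
    linarith

lemma isStronglyConnected_exampleMatrix_iff (hx : 0 < x) :
    IsStronglyConnected (EfficiencyEdge exampleMatrix (exampleVector x)) ↔
      3 / 8 ≤ x ∧ x ≤ 6 := by
  refine ⟨fun h => ?_, fun ⟨hlo, hhi⟩ => isStronglyConnected_of_forall_sameCycle (by decide)
    (efficiencyEdge_hamiltonianCycle hlo hhi)⟩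
  obtain ⟨j, hleave, -⟩ := (h 4 0).cases_head.resolve_left (by decide)
  obtain ⟨i, -, henter⟩ := (h 0 4).cases_tail.resolve_left (by decide)
  exact ⟨three_div_eight_le_of_efficiencyEdge hleave, le_six_of_efficiencyEdge hx henter⟩

end Example

/-- For the given 5-by-5 reciprocal matrix, the vector `(3, 2, 1, 3/4, w₅)` is
efficient exactly when `3/8 ≤ w₅ ≤ 6`; these are the only efficient vectors with
first four entries `(3, 2, 1, 3/4)`. -/
theorem stmt_19 (A : Matrix (Fin 5) (Fin 5) ℝ)
    (hA : A = Matrix.of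
      ![![1, 1, 9, 4, 1 / 2],
        ![1, 1, 1, 4, 3],
        ![1 / 9, 1, 1, 1, 1 / 3],
        ![1 / 4, 1 / 4, 1, 1, 2],
        ![2, 1 / 3, 3, 1 / 2, 1]])
    (w5 : ℝ) (hw5 : 0 < w5) :
    Efficient A ![3, 2, 1, 3 / 4, w5] ↔ (3 / 8 ≤ w5 ∧ w5 ≤ 6) := by
  obtain rfl : A = exampleMatrix := hA
  exact (efficient_iff_isStronglyConnected exampleMatrix_apply_swap (exampleVector_pos hw5)).trans
    (isStronglyConnected_exampleMatrix_iff hw5)
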